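/- arXiv:0907.0175 — 2 statements merged into one kernel-verified Lean document; each statement's English description precedes it below -/
import Mathlib

section
/- Consider a family of ℓ non-self-crossing curves and p points in the plane. Let m_1 be the maximum number of curves passing through any fixed pair of distinct points, and let m_2 be the average over unordered pairs of curves of the number of their intersection points, m_2 = C(ℓ,2)^{-1} ∑_{{c_1,c_2}} |c_1 ∩ c_2|. Then the number of point–curve incidences I satisfies I ≪ (m_1 m_2)^{1/3} (pℓ)^{2/3} + ℓ + m_1 p. -/
lemma exists_clog {A : Type} [TopologicalSpace A] [SimplyConnectedSpace A]
    [LocallyPathConnectedSpace A] (f : A → ℂ) (hf : Continuous f) (h0 : ∀ a, f a ≠ 0) :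
    ∃ L : A → ℂ, Continuous L ∧ ∀ a, Complex.exp (L a) = f a := by
  obtain ⟨a₀⟩ : Nonempty A := inferInstance
  obtain ⟨F, ⟨_, hF⟩, _⟩ := Complex.isCoveringMap_exp.existsUnique_continuousMap_lifts
    (⟨fun a => ⟨f a, h0 a⟩, by fun_prop⟩ : C(A, {z : ℂ // z ≠ 0})) a₀ (Complex.log (f a₀))
    (by simp [Complex.exp_log (h0 a₀)])
  refine ⟨F, F.continuous, fun a => ?_⟩
  have := congrFun hF a
  simpa using congrArg Subtype.val this

lemma clog_unique (a b : ℝ → ℂ) (c : ℂ) (ha : Continuous a) (hb : Continuous b)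
    (h : ∀ s, Complex.exp (a s) = c * Complex.exp (b s)) : a 1 - a 0 = b 1 - b 0 := by
  have hc : ∀ s, Complex.exp (a s - b s) = c := by
    intro s
    rw [Complex.exp_sub, h s]
    field_simp [Complex.exp_ne_zero]
  have := Complex.isCoveringMap_exp.isSeparatedMap.const_of_comp
    Complex.isCoveringMap_exp.isLocalHomeomorph.isLocallyInjective
    (ha.sub hb) (fun s t => by ext; simp [hc]) 1 0
  simp only [Pi.sub_apply] at this
  linear_combination this


lemma K5_aux (x : ℕ → ℂ) (g : ℕ → ℕ → ℝ → ℂ) 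
    (hc : ∀ i j, i < j → j < 5 → Continuous (g i j))
    (h0 : ∀ i j, i < j → j < 5 → g i j 0 = x i)
    (h1 : ∀ i j, i < j → j < 5 → g i j 1 = x j)
    (hd : ∀ i j k l, i < j → j < 5 → k < l → l < 5 → i ≠ k → i ≠ l → j ≠ k → j ≠ l →
      ∀ s t, g i j s ≠ g k l t) : False := by
  -- vertex avoids edge
  have hv : ∀ k i j, i < j → j < 5 → k < 5 → k ≠ i → k ≠ j → ∀ s, g i j s ≠ x k := by
    intro k i j hij hj hk hki hkj s
    obtain ⟨l, hl, h⟩ : ∃ l, l < 5 ∧ l ≠ i ∧ l ≠ j ∧ l ≠ k := by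
      by_contra hcon
      push Not at hcon
      have a0 := hcon 0; have a1 := hcon 1; have a2 := hcon 2; have a3 := hcon 3
      omega
    rcases lt_or_gt_of_ne h.2.2 with hlk | hlk
    · rw [← h1 l k hlk hk]
      exact hd i j l k hij hj hlk hk (Ne.symm h.1) (Ne.symm hki) (Ne.symm h.2.1) (Ne.symm hkj) s 1
    · rw [← h0 k l hlk hl]
      exact hd i j k l hij hj hlk hl (Ne.symm hki) (Ne.symm h.1) (Ne.symm hkj) (Ne.symm h.2.1) s 0
  have hx : ∀ a b, a < b → b < 5 → x a ≠ x b := by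
    intro a b hab hb
    obtain ⟨l, hl, h⟩ : ∃ l, l < 5 ∧ l ≠ a ∧ l ≠ b := by
      by_contra hcon
      push Not at hcon
      have a0 := hcon 0; have a1 := hcon 1; have a2 := hcon 2
      omega
    rcases lt_or_gt_of_ne h.1 with hla | hla
    · rw [← h1 l a hla (by omega)]
      exact hv b l a hla (by omega) hb (Ne.symm h.2) (by omega) 1
    · rw [← h0 a l hla hl]
      exact hv b a l hla (by omega) hb (by omega) (Ne.symm h.2) 0
  have hlam : ∀ k i j, ∃ la : ℝ → ℂ, (i < j → j < 5 → k < 5 → k ≠ i → k ≠ j →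
      Continuous la ∧ ∀ s, Complex.exp (la s) = g i j s - x k) := by
    intro k i j
    by_cases h : i < j ∧ j < 5 ∧ k < 5 ∧ k ≠ i ∧ k ≠ j
    · obtain ⟨a, b, c, d, e⟩ := h
      have hcc := hc i j a b
      obtain ⟨L, hL⟩ := exists_clog (fun s => g i j s - x k) (by fun_prop)
        (fun s => sub_ne_zero.2 (hv k i j a b c d e s))
      exact ⟨L, fun _ _ _ _ _ => hL⟩
    · exact ⟨0, fun a b c d e => absurd ⟨a, b, c, d, e⟩ h⟩
  choose la hla using hlam
  obtain ⟨th, hth1, hth2⟩ : ∃ th : ℕ → ℕ → ℂ,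
      (∀ a b, a < 5 → b < 5 → a ≠ b → Complex.exp (th a b) = x a - x b) ∧
      (∀ a b, a ≠ b → th a b - th b a = ((if a < b then -1 else 1 : ℤ) : ℂ) * (Real.pi * Complex.I)) := by
    refine ⟨fun a b => if a < b then Complex.log (x a - x b)
      else Complex.log (x b - x a) + Real.pi * Complex.I, ?_, ?_⟩
    · intro a b ha hb hab
      rcases lt_or_gt_of_ne hab with h | h
      · simp only [h, if_true]
        exact Complex.exp_log (sub_ne_zero.2 (hx a b h hb))
      · simp only [h.not_gt, if_false]
        rw [Complex.exp_add, Complex.exp_log (sub_ne_zero.2 (hx b a h ha)), Complex.exp_pi_mul_I]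
        ring
    · intro a b hab
      rcases lt_or_gt_of_ne hab with h | h
      · simp only [h, h.not_gt, if_true, if_false]
        push_cast; ring
      · simp only [h, h.not_gt, if_true, if_false]
        push_cast; ring
  have hn : ∀ k i j, ∃ n : ℤ, (i < j → j < 5 → k < 5 → k ≠ i → k ≠ j →
      la k i j 1 - la k i j 0 = th j k - th i k + n * (2 * Real.pi * Complex.I)) := by
    intro k i j
    by_cases h : i < j ∧ j < 5 ∧ k < 5 ∧ k ≠ i ∧ k ≠ j
    · obtain ⟨a, b, c, d, e⟩ := h
      obtain ⟨_, hL⟩ := hla k i j a b c d e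
      have e1 := hL 1
      have e0 := hL 0
      rw [h1 i j a b, ← hth1 j k b c (Ne.symm e)] at e1
      rw [h0 i j a b, ← hth1 i k (by omega) c (Ne.symm d)] at e0
      obtain ⟨n1, hn1⟩ := Complex.exp_eq_exp_iff_exists_int.1 e1
      obtain ⟨n0, hn0⟩ := Complex.exp_eq_exp_iff_exists_int.1 e0
      refine ⟨n1 - n0, fun _ _ _ _ _ => ?_⟩
      rw [hn1, hn0]; push_cast; ring
    · exact ⟨0, fun a b c d e => absurd ⟨a, b, c, d, e⟩ h⟩
  choose n hn using hn
  have key : ∀ i j k l, i < j → j < 5 → k < l → l < 5 → i ≠ k → i ≠ l → j ≠ k → j ≠ l →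
      2 * (n k i j + n j k l - n i k l - n l i j) + (if j < k then -1 else 1) 
      - (if i < k then -1 else 1) + (if l < j then -1 else 1) - (if l < i then -1 else 1) = 0 := by
    intro i j k l hij hj hkl hl ik il jk jl
    have c1 := hc i j hij hj
    have c2 := hc k l hkl hl
    obtain ⟨L, hLc, hL⟩ := exists_clog (fun p : ℝ × ℝ => g i j p.1 - g k l p.2) (by fun_prop)
        (fun p => sub_ne_zero.2 (hd i j k l hij hj hkl hl ik il jk jl p.1 p.2))
    have hk : k < 5 := by omega
    have hi : i < 5 := by omega
    obtain ⟨q1, r1⟩ := hla k i j hij hj hk ik.symm jk.symm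
    obtain ⟨q2, r2⟩ := hla l i j hij hj hl il.symm jl.symm
    obtain ⟨q3, r3⟩ := hla i k l hkl hl hi ik il
    obtain ⟨q4, r4⟩ := hla j k l hkl hl hj jk jl
    have u1 := clog_unique (fun s => L (s, 0)) (la k i j) 1 (by fun_prop) q1
      (by intro s; simp [hL, r1, h0 k l hkl hl])
    have u2 := clog_unique (fun s => L (s, 1)) (la l i j) 1 (by fun_prop) q2
      (by intro s; simp [hL, r2, h1 k l hkl hl])
    have u3 := clog_unique (fun s => L (0, s)) (la i k l) (-1) (by fun_prop) q3
      (by intro s; simp [hL, r3, h0 i j hij hj])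
    have u4 := clog_unique (fun s => L (1, s)) (la j k l) (-1) (by fun_prop) q4
      (by intro s; simp [hL, r4, h1 i j hij hj])
    rw [hn k i j hij hj hk ik.symm jk.symm] at u1
    rw [hn l i j hij hj hl il.symm jl.symm] at u2
    rw [hn i k l hkl hl hi ik il] at u3
    rw [hn j k l hkl hl hj jk jl] at u4
    have v1 := hth2 j k jk
    have v2 := hth2 i k ik
    have v3 := hth2 l j jl.symm
    have v4 := hth2 l i il.symm
    have hpi : (Real.pi * Complex.I : ℂ) ≠ 0 := by simp [Real.pi_ne_zero]
    have : (Real.pi * Complex.I : ℂ) * ((2 * (n k i j + n j k l - n i k l - n l i j) + (if j < k then -1 else 1) 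
      - (if i < k then -1 else 1) + (if l < j then -1 else 1) - (if l < i then -1 else 1) : ℤ) : ℂ) = 0 := by
      push_cast
      push_cast at v1 v2 v3 v4
      linear_combination -u1 - u4 + u3 + u2 - v1 + v2 - v3 + v4
    rcases mul_eq_zero.1 this with h | h
    · exact absurd h hpi
    · exact_mod_cast h
  have a1 := key 0 1 2 3; have a2 := key 0 1 2 4; have a3 := key 0 1 3 4
  have a4 := key 0 2 1 3; have a5 := key 0 2 1 4; have a6 := key 0 2 3 4
  have a7 := key 0 3 1 2; have a8 := key 0 3 1 4; have a9 := key 0 3 2 4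
  have b1 := key 0 4 1 2; have b2 := key 0 4 1 3; have b3 := key 0 4 2 3
  have b4 := key 1 2 3 4; have b5 := key 1 3 2 4; have b6 := key 1 4 2 3
  norm_num at a1 a2 a3 a4 a5 a6 a7 a8 a9 b1 b2 b3 b4 b5 b6
  omega

/-- `B` is connected with respect to the relation `R`. -/
def RConn {V : Type} (R : V → V → Prop) (B : Set V) : Prop :=
  ∀ a ∈ B, ∀ b ∈ B, Relation.ReflTransGen (fun u v => R u v ∧ u ∈ B ∧ v ∈ B) a b

/-- a complete minor of order `t` inside `S`. -/
def HasMinor {V : Type} (R : V → V → Prop) (S : Finset V) (t : ℕ) : Prop :=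
  ∃ B : ℕ → Set V, (∀ i < t, B i ⊆ S ∧ (B i).Nonempty ∧ RConn R (B i)) ∧
    (∀ i < t, ∀ j < t, i ≠ j → Disjoint (B i) (B j) ∧ ∃ a ∈ B i, ∃ b ∈ B j, R a b)

open Classical in
lemma contract_count {V : Type} (R : V → V → Prop) (hs : ∀ a b, R a b → R b a)
    (hi : ∀ a, ¬ R a a) (S : Finset V) (x y : V) (hx : x ∈ S) (hxy : R x y) :
    ((S ×ˢ S).filter (fun p => R p.1 p.2)).card ≤
      (((S.erase y) ×ˢ (S.erase y)).filter (fun p => p.1 ≠ p.2 ∧ (R p.1 p.2 ∨ (p.1 = x ∧ R y p.2)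
        ∨ (p.2 = x ∧ R p.1 y)))).card + 2 * ((S.filter (fun z => R x z ∧ R y z)).card + 1) := by
  set C := S.filter (fun z => R x z ∧ R y z) with hC
  set D' := (((S.erase y) ×ˢ (S.erase y)).filter (fun p => p.1 ≠ p.2 ∧ (R p.1 p.2 ∨ (p.1 = x ∧ R y p.2)
        ∨ (p.2 = x ∧ R p.1 y)))) with hD'
  set Bad : Finset (V × V) := ({y} ×ˢ (insert x C)) ∪ ((insert x C) ×ˢ {y}) with hBad
  have hBadc : Bad.card ≤ 2 * (C.card + 1) := by
    refine (Finset.card_union_le _ _).trans ?_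
    have := Finset.card_insert_le x C
    simp only [Finset.card_product, Finset.card_singleton]
    omega
  have hne : x ≠ y := fun h => hi x (by rw [h] at hxy ⊢; exact hxy)
  have : (((S ×ˢ S).filter (fun p => R p.1 p.2)) \ Bad).card ≤ D'.card := by
    refine Finset.card_le_card_of_injOn
      (fun p => (if p.1 = y then x else p.1, if p.2 = y then x else p.2)) ?_ ?_
    · rintro ⟨a, b⟩ h
      simp [hBad, hC] at h
      simp only [hD', Finset.coe_filter, Finset.mem_product, Finset.mem_erase, Set.mem_ofPred_eq]
      grind
    · rintro ⟨a, b⟩ h ⟨a', b'⟩ h' heq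
      simp [hBad, hC] at h h' heq
      ext <;> grind
  have := Finset.le_card_sdiff Bad ((S ×ˢ S).filter (fun p => R p.1 p.2))
  omega

open Classical in
lemma minor_of_contract {V : Type} (R : V → V → Prop) (hs : ∀ a b, R a b → R b a)
    (S : Finset V) (x y : V) (hy : y ∈ S) (hxy : R x y) (t : ℕ)
    (h : HasMinor (fun a b => a ≠ b ∧ (R a b ∨ (a = x ∧ R y b) ∨ (b = x ∧ R a y))) (S.erase y) t) :
    HasMinor R S t := by
  obtain ⟨B, h1, h2⟩ := h
  refine ⟨fun i => B i ∪ {z | z = y ∧ x ∈ B i}, ?_, ?_⟩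
  · intro i hi
    obtain ⟨p, q, r⟩ := h1 i hi
    refine ⟨?_, q.mono Set.subset_union_left, ?_⟩
    · rintro z (hz | ⟨rfl, -⟩)
      · exact Finset.mem_of_mem_erase (p hz)
      · exact hy
    · have key : ∀ a ∈ B i, ∀ b ∈ B i, Relation.ReflTransGen (fun u v => R u v ∧
          u ∈ B i ∪ {z | z = y ∧ x ∈ B i} ∧ v ∈ B i ∪ {z | z = y ∧ x ∈ B i}) a b := by
        intro a ha b hb
        refine Relation.reflTransGen_closed ?_ _ _ (r a ha b hb)
        rintro u v ⟨⟨_, h | ⟨rfl, h⟩ | ⟨rfl, h⟩⟩, hu, hv⟩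
        · exact .single ⟨h, .inl hu, .inl hv⟩
        · exact .head (b := y) ⟨hxy, .inl hu, .inr ⟨rfl, hu⟩⟩ (.single ⟨h, .inr ⟨rfl, hu⟩, .inl hv⟩)
        · exact .head (b := y) ⟨h, .inl hu, .inr ⟨rfl, hv⟩⟩ (.single ⟨hs _ _ hxy, .inr ⟨rfl, hv⟩, .inl hv⟩)
      rintro a (ha | ⟨rfl, ha⟩) b (hb | ⟨rfl, hb⟩)
      · exact key a ha b hb
      · exact .tail (key a ha x hb) ⟨hxy, .inl hb, .inr ⟨rfl, hb⟩⟩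
      · exact .head ⟨hs _ _ hxy, .inr ⟨rfl, ha⟩, .inl ha⟩ (key x ha b hb)
      · exact .refl
  · intro i hi j hj hij
    obtain ⟨hd, a, ha, b, hb, _, hab⟩ := h2 i hi j hj hij
    have pi := (h1 i hi).1
    have pj := (h1 j hj).1
    rw [Set.disjoint_left] at hd
    refine ⟨?_, ?_⟩
    · rw [Set.disjoint_left]
      rintro z (hz | ⟨rfl, hz⟩) (hz' | ⟨h, hz'⟩)
      · exact hd hz hz'
      · subst h; simpa using pi hz
      · simpa using pj hz'
      · exact hd hz hz'
    · rcases hab with h | ⟨rfl, h⟩ | ⟨rfl, h⟩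
      · exact ⟨a, .inl ha, b, .inl hb, h⟩
      · exact ⟨y, .inr ⟨rfl, ha⟩, b, .inl hb, h⟩
      · exact ⟨a, .inl ha, y, .inr ⟨rfl, hb⟩, h⟩

open Classical in
lemma mader {V : Type} (t : ℕ) : ∀ (m : ℕ) (R : V → V → Prop) (_ : ∀ a b, R a b → R b a)
    (_ : ∀ a, ¬ R a a) (S : Finset V), S.card = m → S.Nonempty →
    2 ^ (t + 1) * S.card ≤ ((S ×ˢ S).filter (fun p => R p.1 p.2)).card → HasMinor R S t := by
  induction t with
  | zero =>
    intro m R hs hi S _ _ _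
    exact ⟨fun _ => ∅, by simp, by simp⟩
  | succ t iht =>
    intro m
    induction m with
    | zero =>
      intro R hs hi S h0 hne
      simp [Finset.card_eq_zero] at h0
      simp [h0] at hne
    | succ m ihm =>
      intro R hs hi S hcard hne hcount
      have hpos : 0 < ((S ×ˢ S).filter (fun p => R p.1 p.2)).card := by
        refine lt_of_lt_of_le ?_ hcount
        have := hne.card_pos
        positivity
      obtain ⟨⟨x, y0⟩, hxy0⟩ := Finset.card_pos.1 hpos
      simp only [Finset.mem_filter, Finset.mem_product] at hxy0
      by_cases hcase : ∃ y ∈ S, R x y ∧ (S.filter (fun z => R x z ∧ R y z)).card + 1 ≤ 2 ^ (t + 1)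
      · obtain ⟨y, hy, hxy, hcom⟩ := hcase
        have hcc := contract_count R hs hi S x y hxy0.1.1 hxy
        apply minor_of_contract R hs S x y hy hxy
        have hec := Finset.card_erase_of_mem hy
        have hxe : x ∈ S.erase y := by
          refine Finset.mem_erase.2 ⟨fun h => hi x ?_, hxy0.1.1⟩
          rw [h] at hxy ⊢; exact hxy
        refine ihm _ ?_ ?_ (S.erase y) (by omega) ⟨x, hxe⟩ ?_
        · rintro a b ⟨h, h'⟩
          refine ⟨h.symm, ?_⟩
          rcases h' with h' | ⟨h1, h2⟩ | ⟨h1, h2⟩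
          · exact .inl (hs _ _ h')
          · exact .inr (.inr ⟨h1, hs _ _ h2⟩)
          · exact .inr (.inl ⟨h1, hs _ _ h2⟩)
        · rintro a ⟨h, _⟩; exact h rfl
        · rw [hec, hcard]
          rw [hcard] at hcount
          have e1 : 2 ^ (t + 1 + 1) = 2 * 2 ^ (t + 1) := by ring
          rw [e1] at hcount ⊢
          simp only [Nat.add_sub_cancel]
          have hk : 2 * 2 ^ (t + 1) * (m + 1) = 2 * 2 ^ (t + 1) * m + 2 * 2 ^ (t + 1) := by ring
          refine le_trans (b := _) (by omega : _ ≤ (((S.erase y) ×ˢ (S.erase y)).filter (fun p => p.1 ≠ p.2 ∧ (R p.1 p.2 ∨ (p.1 = x ∧ R y p.2)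
        ∨ (p.2 = x ∧ R p.1 y)))).card) (le_of_eq ?_)
          congr
      · push Not at hcase
        set T := S.filter (fun z => R x z) with hT
        have hTn : T.Nonempty := ⟨y0, by simp [hT, hxy0]⟩
        have hTc : 2 ^ (t + 1) * T.card ≤ ((T ×ˢ T).filter (fun p => R p.1 p.2)).card := by
          have : ((T ×ˢ T).filter (fun p => R p.1 p.2)).card
              = ∑ y ∈ T, (T.filter (fun z => R y z)).card := by
            simp only [Finset.card_filter, Finset.sum_product]
          rw [this, mul_comm, ← smul_eq_mul]
          apply Finset.card_nsmul_le_sum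
          intro y hy
          have hy' := Finset.mem_filter.1 hy
          have := hcase y hy'.1 hy'.2
          have e : T.filter (fun z => R y z) = S.filter (fun z => R x z ∧ R y z) := by
            rw [hT, Finset.filter_filter]
          rw [e]; omega
        obtain ⟨B, h1, h2⟩ := iht _ R hs hi T rfl hTn hTc
        have hxT : x ∉ T := by simp [hT, hi]
        refine ⟨fun i => if i = t then {x} else B i, ?_, ?_⟩
        · intro i hit
          by_cases h : i = t
          · simp only [h, if_true]
            refine ⟨by simpa using hxy0.1.1, by simp, ?_⟩
            rintro a rfl b rfl
            exact .refl
          · simp only [h, if_false]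
            obtain ⟨p, q, r⟩ := h1 i (by omega)
            exact ⟨fun z hz => (Finset.mem_filter.1 (p hz)).1, q, r⟩
        · intro i hit j hjt hij
          by_cases h : i = t
          · have h' : j ≠ t := by omega
            simp only [h, h', if_true, if_false]
            obtain ⟨p, ⟨z, hz⟩, r⟩ := h1 j (by omega)
            exact ⟨by simpa using fun hh => hxT (p hh), x, rfl, z, hz, (Finset.mem_filter.1 (p hz)).2⟩
          · by_cases h' : j = t
            · simp only [h, h', if_true, if_false]
              obtain ⟨p, ⟨z, hz⟩, r⟩ := h1 i (by omega)
              exact ⟨by simpa using fun hh => hxT (p hh), z, hz, x, rfl, hs _ _ (Finset.mem_filter.1 (p hz)).2⟩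
            · simp only [h, h', if_false]
              exact h2 i (by omega) j (by omega) hij

/-- independent crossing of two drawn edges -/
def Crs {V E : Type} (u v : E → V) (A : E → Set (ℝ × ℝ)) (e f : E) : Prop :=
  u e ≠ u f ∧ u e ≠ v f ∧ v e ≠ u f ∧ v e ≠ v f ∧ (A e ∩ A f).Nonempty

lemma no_K5_minor {V E : Type} (pos : V → ℝ × ℝ) (u v : E → V) (A : E → Set (ℝ × ℝ))
    (hJ : ∀ e, JoinedIn (A e) (pos (u e)) (pos (v e))) (F : Finset E) (S : Finset V)
    (hcr : ∀ e ∈ F, ∀ f ∈ F, ¬ Crs u v A e f)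
    (hm : HasMinor (fun a b => ∃ e ∈ F, (u e = a ∧ v e = b) ∨ (u e = b ∧ v e = a)) S 5) : False := by
  obtain ⟨B, h1, h2⟩ := hm
  have hb : ∀ i, ∃ b, i < 5 → b ∈ B i := by
    intro i
    by_cases h : i < 5
    · obtain ⟨b, hb⟩ := (h1 i h).2.1
      exact ⟨b, fun _ => hb⟩
    · obtain ⟨b, hb⟩ := (h1 0 (by norm_num)).2.1
      exact ⟨b, fun h' => absurd h' h⟩
  choose b hb using hb
  set W : ℕ → ℕ → Set (ℝ × ℝ) := fun i j =>
    ⋃ e ∈ {e | e ∈ F ∧ (u e ∈ B i ∨ u e ∈ B j) ∧ (v e ∈ B i ∨ v e ∈ B j)}, A e with hW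
  have hstep : ∀ i j a c, (∃ e ∈ F, (u e = a ∧ v e = c) ∨ (u e = c ∧ v e = a)) →
      (a ∈ B i ∨ a ∈ B j) → (c ∈ B i ∨ c ∈ B j) → JoinedIn (W i j) (pos a) (pos c) := by
    rintro i j a c ⟨e, heF, ⟨rfl, rfl⟩ | ⟨rfl, rfl⟩⟩ ha hc
    · exact (hJ e).mono (Set.subset_biUnion_of_mem (u := A) (show e ∈ {e | e ∈ F ∧ (u e ∈ B i ∨ u e ∈ B j) ∧ (v e ∈ B i ∨ v e ∈ B j)} from ⟨heF, ha, hc⟩))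
    · exact ((hJ e).mono (Set.subset_biUnion_of_mem (u := A) (show e ∈ {e | e ∈ F ∧ (u e ∈ B i ∨ u e ∈ B j) ∧ (v e ∈ B i ∨ v e ∈ B j)} from ⟨heF, hc, ha⟩))).symm
  have hconn : ∀ i j k, k < 5 → (k = i ∨ k = j) → ∀ a ∈ B k, ∀ c ∈ B k,
      a = c ∨ JoinedIn (W i j) (pos a) (pos c) := by
    intro i j k hk hkij a ha c hc
    have := (h1 k hk).2.2 a ha c hc
    induction this with
    | refl => exact .inl rfl
    | @tail y z hy hz ih =>
      right
      have hyz := hstep i j y z hz.1 (by rcases hkij with rfl | rfl <;> simp [hz.2])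
        (by rcases hkij with rfl | rfl <;> simp [hz.2])
      rcases ih hz.2.1 with rfl | h
      · exact hyz
      · exact h.trans hyz
  have hjoin : ∀ i j, i < j → j < 5 → JoinedIn (W i j) (pos (b i)) (pos (b j)) := by
    intro i j hij hj
    have hi : i < 5 := by omega
    obtain ⟨_, a, ha, c, hc, hac⟩ := h2 i hi j hj hij.ne
    have hs := hstep i j a c hac (.inl ha) (.inr hc)
    have hs2 : JoinedIn (W i j) (pos (b i)) (pos c) := by
      rcases hconn i j i hi (.inl rfl) (b i) (hb i hi) a ha with h | h
      · rw [h]; exact hs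
      · exact h.trans hs
    rcases hconn i j j hj (.inr rfl) c hc (b j) (hb j hj) with h | h
    · rw [← h]; exact hs2
    · exact hs2.trans h
  have hpath : ∀ i j, ∃ g : ℝ → ℝ × ℝ, i < j → j < 5 →
      Continuous g ∧ g 0 = pos (b i) ∧ g 1 = pos (b j) ∧ ∀ s, g s ∈ W i j := by
    intro i j
    by_cases h : i < j ∧ j < 5
    · obtain ⟨p, hp⟩ := hjoin i j h.1 h.2
      refine ⟨p.extend, fun _ _ => ⟨p.continuous_extend, by simp, by simp, fun s => ?_⟩⟩
      have : p.extend s ∈ Set.range p := by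
        rw [← Path.extend_range]; exact Set.mem_range_self s
      obtain ⟨t, ht⟩ := this
      rw [← ht]
      exact hp t
    · exact ⟨0, fun a b => absurd ⟨a, b⟩ h⟩
  choose g hg using hpath
  let φ : ℝ × ℝ → ℂ := Complex.equivRealProdCLM.symm
  have hφc : Continuous φ := Complex.equivRealProdCLM.symm.continuous
  have hφi : Function.Injective φ := Complex.equivRealProdCLM.symm.injective
  refine K5_aux (fun i => φ (pos (b i))) (fun i j s => φ (g i j s)) ?_ ?_ ?_ ?_
  · intro i j hij hj
    exact hφc.comp (hg i j hij hj).1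
  · intro i j hij hj
    simp only [(hg i j hij hj).2.1]
  · intro i j hij hj
    simp only [(hg i j hij hj).2.2.1]
  · intro i j k l hij hj hkl hl ik il jk jl s t heq
    have heq := hφi heq
    have m1 := (hg i j hij hj).2.2.2 s
    have m2 := (hg k l hkl hl).2.2.2 t
    rw [heq] at m1
    simp only [hW, Set.mem_iUnion] at m1 m2
    obtain ⟨e, ⟨heF, heu, hev⟩, he⟩ := m1
    obtain ⟨f, ⟨hfF, hfu, hfv⟩, hf⟩ := m2
    have hdj : ∀ a c, (a ∈ B i ∨ a ∈ B j) → (c ∈ B k ∨ c ∈ B l) → a ≠ c := by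
      rintro a c ha hc rfl
      have d1 := Set.disjoint_left.1 (h2 i (by omega) k (by omega) ik).1
      have d2 := Set.disjoint_left.1 (h2 i (by omega) l (by omega) il).1
      have d3 := Set.disjoint_left.1 (h2 j (by omega) k (by omega) jk).1
      have d4 := Set.disjoint_left.1 (h2 j (by omega) l (by omega) jl).1
      rcases ha with ha | ha <;> rcases hc with hc | hc
      · exact d1 ha hc
      · exact d2 ha hc
      · exact d3 ha hc
      · exact d4 ha hc
    exact hcr e heF f hfF ⟨hdj _ _ heu hfu, hdj _ _ heu hfv, hdj _ _ hev hfu, hdj _ _ hev hfv,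
      ⟨_, he, hf⟩⟩

open Classical in
lemma planar_bound {V E : Type} (pos : V → ℝ × ℝ) (u v : E → V) (A : E → Set (ℝ × ℝ))
    (hJ : ∀ e, JoinedIn (A e) (pos (u e)) (pos (v e))) (huv : ∀ e, u e ≠ v e)
    (F : Finset E) (S : Finset V) (hS : ∀ e ∈ F, u e ∈ S ∧ v e ∈ S)
    (hsim : ∀ e ∈ F, ∀ f ∈ F, s(u e, v e) = s(u f, v f) → e = f)
    (hcr : ∀ e ∈ F, ∀ f ∈ F, ¬ Crs u v A e f) : F.card ≤ 32 * S.card := by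
  by_contra hcon
  push Not at hcon
  have hFne : F.Nonempty := Finset.card_pos.1 (by omega)
  obtain ⟨e0, he0⟩ := hFne
  refine no_K5_minor pos u v A hJ F S hcr (mader 5 _ _ ?_ ?_ S rfl ⟨_, (hS e0 he0).1⟩ ?_)
  · rintro a b ⟨e, he, h⟩
    exact ⟨e, he, h.symm⟩
  · rintro a ⟨e, he, ⟨h, h'⟩ | ⟨h, h'⟩⟩ <;> exact huv e (h.trans h'.symm)
  · have : (F ×ˢ (Finset.univ : Finset Bool)).card ≤ ((S ×ˢ S).filter (fun p =>
        ∃ e ∈ F, (u e = p.1 ∧ v e = p.2) ∨ (u e = p.2 ∧ v e = p.1))).card := by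
      refine Finset.card_le_card_of_injOn
        (fun p => if p.2 then (u p.1, v p.1) else (v p.1, u p.1)) ?_ ?_
      · rintro ⟨e, c⟩ h
        simp only [Finset.coe_product, Set.mem_prod, Finset.mem_coe] at h
        have := hS e h.1
        cases c <;> simp [this] <;> exact ⟨e, h.1, by simp⟩
      · rintro ⟨e, c⟩ h ⟨f, d⟩ h' heq
        simp only [Finset.coe_product, Set.mem_prod, Finset.mem_coe] at h h'
        have hef : e = f := by
          apply hsim e h.1 f h'.1
          rw [Sym2.eq_iff]
          cases c <;> cases d <;> simp at heq <;> tauto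
        subst hef
        have := huv e
        cases c <;> cases d <;> simp at heq ⊢ <;> grind
    simp only [Finset.card_product, Finset.card_univ, Fintype.card_bool] at this
    norm_num
    refine le_trans (by omega) (this.trans (le_of_eq ?_))
    congr

open Classical in
lemma cross_linear {V E : Type} (pos : V → ℝ × ℝ) (u v : E → V) (A : E → Set (ℝ × ℝ))
    (hJ : ∀ e, JoinedIn (A e) (pos (u e)) (pos (v e))) (huv : ∀ e, u e ≠ v e)
    (S : Finset V) (k : ℕ) : ∀ (F : Finset E), F.card = k → (∀ e ∈ F, u e ∈ S ∧ v e ∈ S) →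
    (∀ e ∈ F, ∀ f ∈ F, s(u e, v e) = s(u f, v f) → e = f) →
    F.card ≤ ((F ×ˢ F).filter (fun p => Crs u v A p.1 p.2)).card + 32 * S.card := by
  induction k with
  | zero => intro F h; omega
  | succ k ih =>
    intro F hk hS hsim
    by_cases hcr : ∀ e ∈ F, ∀ f ∈ F, ¬ Crs u v A e f
    · have := planar_bound pos u v A hJ huv F S hS hsim hcr
      omega
    · push Not at hcr
      obtain ⟨e, he, f, hf, hef⟩ := hcr
      have hc := Finset.card_erase_of_mem he
      have := ih (F.erase e) (by omega) (fun e' h => hS e' (Finset.mem_of_mem_erase h))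
        (fun e' h f' h' => hsim e' (Finset.mem_of_mem_erase h) f' (Finset.mem_of_mem_erase h'))
      have hlt : (((F.erase e) ×ˢ (F.erase e)).filter (fun p => Crs u v A p.1 p.2)).card <
          ((F ×ˢ F).filter (fun p => Crs u v A p.1 p.2)).card := by
        apply Finset.card_lt_card
        refine Finset.ssubset_iff_subset_ne.2 ⟨?_, ?_⟩
        · apply Finset.filter_subset_filter
          exact Finset.product_subset_product (Finset.erase_subset _ _) (Finset.erase_subset _ _)
        · intro heq
          have : (e, f) ∈ ((F ×ˢ F).filter (fun p => Crs u v A p.1 p.2)) := by simp [he, hf, hef]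
          rw [← heq] at this
          simp at this
      omega

open Classical in
lemma count_fun {α : Type} [Fintype α] (N : ℕ) (T : Finset α) (h : α → Fin N) :
    (Finset.univ.filter (fun f : α → Fin N => ∀ a ∈ T, f a = h a)).card * N ^ T.card
      = N ^ Fintype.card α := by
  have : (Finset.univ.filter (fun f : α → Fin N => ∀ a ∈ T, f a = h a))
      = Fintype.piFinset (fun a => if a ∈ T then {h a} else Finset.univ) := by
    ext f
    simp only [Finset.mem_filter, Finset.mem_univ, true_and, Fintype.mem_piFinset]
    refine forall_congr' fun a => ?_
    by_cases ha : a ∈ T <;> simp [ha]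
  rw [this, Fintype.card_piFinset]
  have : ∀ a, (if a ∈ T then ({h a} : Finset (Fin N)) else Finset.univ).card
      = if a ∈ T then 1 else N := by
    intro a; split_ifs <;> simp
  simp only [this]
  have h2 : N ^ T.card = ∏ a, if a ∈ T then N else 1 := by
    rw [Finset.prod_ite_mem]; simp
  rw [h2, ← Finset.prod_mul_distrib]
  rw [Finset.prod_congr rfl (g := fun _ => N)]
  · simp
  · intro a _; split_ifs <;> simp

lemma count_prod {α β : Type} [Fintype α] [Fintype β] [DecidableEq α] [DecidableEq β]
    (N m : ℕ) (T : Finset α) (T' : Finset β)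
    (h : α → Fin N) (h' : β → Fin m) (p : (α → Fin N) × (β → Fin m) → Prop) [DecidablePred p]
    (hp : ∀ w, p w ↔ ((∀ a ∈ T, w.1 a = h a) ∧ ∀ a ∈ T', w.2 a = h' a)) :
    (Finset.univ.filter p).card * (N ^ T.card * m ^ T'.card)
      = N ^ Fintype.card α * m ^ Fintype.card β := by
  classical
  have e1 := count_fun N T h
  have e2 := count_fun m T' h'
  have : Finset.univ.filter p
    = (Finset.univ.filter (fun f : α → Fin N => ∀ a ∈ T, f a = h a)) ×ˢ
      (Finset.univ.filter (fun f : β → Fin m => ∀ a ∈ T', f a = h' a)) := by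
    ext w; simp [hp]
  rw [this, Finset.card_product, ← e1, ← e2]
  have l1 : ∀ a b c d : ℕ, a * b * (c * d) = a * c * (b * d) := by intros; ring
  rw [l1]
  congr <;> exact Subsingleton.elim _ _

lemma count_swap {α β : Type} [Fintype α] [Fintype β] (p : α → β → Prop)
    [∀ w, DecidablePred (p w)] [∀ b, DecidablePred (fun w => p w b)] :
      ∑ w : α, (Finset.univ.filter (fun b => p w b)).card
        = ∑ b : β, (Finset.univ.filter (fun w => p w b)).card := by
  classical
  simp only [Finset.card_filter]
  rw [Finset.sum_comm]

open Classical in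
lemma multi_cross {V E : Type} [Fintype V] [Fintype E] (pos : V → ℝ × ℝ) (u v : E → V)
    (A : E → Set (ℝ × ℝ))
    (hJ : ∀ e, JoinedIn (A e) (pos (u e)) (pos (v e))) (huv : ∀ e, u e ≠ v e)
    (N m : ℕ) (hN : 0 < N) (hm : 0 < m) (lab : E → Fin m)
    (hlab : ∀ e f, s(u e, v e) = s(u f, v f) → lab e = lab f → e = f) :
    Fintype.card E * N ^ 2 * m ≤
      (Finset.univ.filter (fun p : E × E => Crs u v A p.1 p.2)).card
        + 32 * Fintype.card V * N ^ 3 * m ^ 2 := by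
  let z : Fin N := ⟨0, hN⟩
  let Fo : (V → Fin N) × (Sym2 V → Fin m) → Finset E := fun w => Finset.univ.filter (fun e =>
    w.1 (u e) = z ∧ w.1 (v e) = z ∧ w.2 s(u e, v e) = lab e)
  let So : (V → Fin N) × (Sym2 V → Fin m) → Finset V := fun w => Finset.univ.filter (fun a => w.1 a = z)
  have hw : ∀ w : (V → Fin N) × (Sym2 V → Fin m), (Fo w).card ≤ ((Fo w ×ˢ Fo w).filter (fun p => Crs u v A p.1 p.2)).card
      + 32 * (So w).card := by
    intro w
    refine cross_linear pos u v A hJ huv (So w) _ (Fo w) rfl ?_ ?_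
    · intro e he
      simp only [Fo, So, Finset.mem_filter, Finset.mem_univ, true_and] at he ⊢
      exact ⟨he.1, he.2.1⟩
    · intro e he f hf hef
      simp only [Fo, Finset.mem_filter, Finset.mem_univ, true_and] at he hf
      apply hlab e f hef
      rw [← he.2.2, ← hf.2.2, hef]
  have hsum := Finset.sum_le_sum (fun w (_ : w ∈ (Finset.univ : Finset ((V → Fin N) × (Sym2 V → Fin m)))) => hw w)
  rw [Finset.sum_add_distrib, ← Finset.mul_sum] at hsum
  set Q := N ^ Fintype.card V * m ^ Fintype.card (Sym2 V) with hQ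
  have hQpos : 0 < Q := by positivity
  have hE : (∑ w, (Fo w).card) * (N ^ 2 * m) = Fintype.card E * Q := by
    simp only [Fo]
    rw [count_swap, Finset.sum_mul, Finset.sum_congr rfl (g := fun _ => Q)]
    · simp
    · intro e _
      have := count_prod N m {u e, v e} {s(u e, v e)} (fun _ => z) (fun _ => lab e)
        (fun w => w.1 (u e) = z ∧ w.1 (v e) = z ∧ w.2 s(u e, v e) = lab e) (by simp [and_assoc])
      rw [Finset.card_pair (huv e)] at this
      simpa using this
  have hV : (∑ w, (So w).card) * N = Fintype.card V * Q := by
    simp only [So]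
    rw [count_swap, Finset.sum_mul, Finset.sum_congr rfl (g := fun _ => Q)]
    · simp
    · intro a _
      have := count_prod N m {a} (∅ : Finset (Sym2 V)) (fun _ => z) (fun _ => ⟨0, hm⟩)
        (fun w => w.1 a = z) (by simp)
      simpa using this
  have hX : (∑ w, ((Fo w ×ˢ Fo w).filter (fun p => Crs u v A p.1 p.2)).card) * (N ^ 4 * m ^ 2)
      = (Finset.univ.filter (fun p : E × E => Crs u v A p.1 p.2)).card * Q := by
    have : ∀ w, (Fo w ×ˢ Fo w).filter (fun p => Crs u v A p.1 p.2) =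
        Finset.univ.filter (fun p : E × E => (p.1 ∈ Fo w ∧ p.2 ∈ Fo w) ∧ Crs u v A p.1 p.2) := by
      intro w; ext p; simp
    simp only [this]
    rw [count_swap, Finset.sum_mul, Finset.card_filter, Finset.sum_mul]
    refine Finset.sum_congr rfl ?_
    rintro ⟨e, f⟩ _
    by_cases hef : Crs u v A e f
    · have hc := hef
      obtain ⟨c1, c2, c3, c4, -⟩ := hc
      have hne : s(u e, v e) ≠ s(u f, v f) := by
        rw [Ne, Sym2.eq_iff]; tauto
      have := count_prod N m {u e, v e, u f, v f} {s(u e, v e), s(u f, v f)} (fun _ => z)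
        (fun a => if a = s(u e, v e) then lab e else lab f)
        (fun w => (e ∈ Fo w ∧ f ∈ Fo w) ∧ Crs u v A e f)
        (by intro w; simp [Fo, hne.symm, hef]; tauto)
      rw [Finset.card_pair hne] at this
      have h4 : ({u e, v e, u f, v f} : Finset V).card = 4 := by
        have := huv e; have := huv f
        rw [Finset.card_insert_of_notMem (by simp [*]), Finset.card_insert_of_notMem (by simp [*]),
          Finset.card_pair (huv f)]
      rw [h4] at this
      simp only [hef, if_true, one_mul]
      simpa [hef] using this
    · simp [hef]
  have h1 := Nat.mul_le_mul_right (N ^ 4 * m ^ 2) hsum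
  refine Nat.le_of_mul_le_mul_right (c := Q) ?_ hQpos
  calc Fintype.card E * N ^ 2 * m * Q = (∑ w, (Fo w).card) * (N ^ 4 * m ^ 2) := by
        calc _ = (Fintype.card E * Q) * (N ^ 2 * m) := by ring
          _ = _ := by rw [← hE]; ring
    _ ≤ _ := h1
    _ = _ := by
        rw [add_mul, hX]
        calc _ = (Finset.univ.filter (fun p : E × E => Crs u v A p.1 p.2)).card * Q
              + 32 * ((∑ w, (So w).card) * N) * (N ^ 3 * m ^ 2) := by ring
          _ = _ := by rw [hV]; ring

attribute [local instance] Classical.propDecidable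
open Finset

/-- consecutive pairs of a finite set of reals -/
noncomputable def consec (T : Finset ℝ) : Finset (ℝ × ℝ) :=
  (T ×ˢ T).filter (fun p => p.1 < p.2 ∧ ∀ r ∈ T, ¬ (p.1 < r ∧ r < p.2))

lemma mem_consec (T : Finset ℝ) (p : ℝ × ℝ) : p ∈ consec T ↔
    p.1 ∈ T ∧ p.2 ∈ T ∧ p.1 < p.2 ∧ ∀ r ∈ T, ¬ (p.1 < r ∧ r < p.2) := by
  simp [consec, and_assoc]

lemma card_consec (T : Finset ℝ) : T.card ≤ (consec T).card + 1 := by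
  rcases T.eq_empty_or_nonempty with rfl | hne
  · simp
  have hsub : T.erase (T.max' hne) ⊆ (consec T).image Prod.fst := by
    intro s hs
    obtain ⟨h1, h2⟩ := Finset.mem_erase.1 hs
    have hlt : s < T.max' hne := lt_of_le_of_ne (Finset.le_max' T s h2) h1
    have hn : (T.filter (fun t => s < t)).Nonempty :=
      ⟨T.max' hne, Finset.mem_filter.2 ⟨Finset.max'_mem _ _, hlt⟩⟩
    have hm := Finset.min'_mem _ hn
    have hm2 := Finset.mem_filter.1 hm
    refine Finset.mem_image.2 ⟨(s, (T.filter (fun t => s < t)).min' hn), ?_, rfl⟩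
    rw [mem_consec]
    refine ⟨h2, hm2.1, hm2.2, ?_⟩
    rintro r hr ⟨hr1, hr2⟩
    exact absurd (Finset.min'_le _ r (Finset.mem_filter.2 ⟨hr, hr1⟩)) (not_le.2 hr2)
  have h1 := (Finset.card_le_card hsub).trans Finset.card_image_le
  rw [Finset.card_erase_of_mem (Finset.max'_mem _ _)] at h1
  omega

lemma exists_lab {E C : Type} [Fintype E] (cls : E → C) (m : ℕ) (hm : 0 < m)
    (h : ∀ c, (Finset.univ.filter (fun e => cls e = c)).card ≤ m) :
    ∃ lab : E → Fin m, ∀ e f, cls e = cls f → lab e = lab f → e = f := by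
  have hc : ∀ c, Nonempty ({e // cls e = c} ↪ Fin m) := by
    intro c
    apply Function.Embedding.nonempty_of_card_le
    rw [Fintype.card_fin, Fintype.card_subtype]
    exact h c
  refine ⟨fun e => (hc (cls e)).some ⟨e, rfl⟩, ?_⟩
  intro e f hef hl
  have : ∀ c (hc' : cls f = c), (hc c).some ⟨f, hc'⟩ = (hc (cls f)).some ⟨f, rfl⟩ := by
    rintro c rfl; rfl
  simp only at hl
  rw [← this _ hef.symm] at hl
  simpa using (hc (cls e)).some.injective hl

lemma final_arith (e n m X : ℕ) (m₁ m₂ ll : ℝ) (hm : 0 < m) (hn : 0 < n) (hmm : (m : ℝ) ≤ m₁)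
    (hll : 0 ≤ ll) (hm2 : 0 ≤ m₂)
    (hX : (X : ℝ) ≤ ll ^ 2 * m₂)
    (h : ∀ N : ℕ, 0 < N → e * N ^ 2 * m ≤ X + 32 * n * N ^ 3 * m ^ 2) :
    (e : ℝ) ≤ 64 * ((m₁ * m₂) ^ ((1:ℝ)/3) * ((n : ℝ) * ll) ^ ((2:ℝ)/3) + m₁ * n) := by
  have hn' : (0 : ℝ) < n := by exact_mod_cast hn
  have hm' : (0 : ℝ) < m := by exact_mod_cast hm
  have hm1 : 0 < m₁ := lt_of_lt_of_le hm' hmm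
  have hY : 0 ≤ (m₁ * m₂) ^ ((1:ℝ)/3) * ((n : ℝ) * ll) ^ ((2:ℝ)/3) := by positivity
  by_cases hsm : (e : ℝ) < 64 * n * m
  · have : (n : ℝ) * m ≤ n * m₁ := by gcongr
    nlinarith
  push Not at hsm
  set r : ℝ := e / (64 * n * m) with hr
  have hre : (e : ℝ) = 64 * n * m * r := by rw [hr]; field_simp
  have hr1 : 1 ≤ r := by rw [hr, le_div_iff₀ (by positivity)]; linarith
  set N := ⌊r⌋₊ with hN
  have hNr : (N : ℝ) ≤ r := Nat.floor_le (by linarith)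
  have hNr2 : r < N + 1 := Nat.lt_floor_add_one r
  have hN1 : 1 ≤ N := Nat.le_floor (by simpa using hr1)
  have hN1' : (1 : ℝ) ≤ N := by exact_mod_cast hN1
  have hh : (e : ℝ) * N ^ 2 * m ≤ X + 32 * n * N ^ 3 * m ^ 2 := by exact_mod_cast h N hN1
  have hX1 : (N : ℝ) ^ 2 * m * (32 * n * m * r) ≤ X := by
    have : (32 : ℝ) * n * N ^ 3 * m ^ 2 ≤ 32 * n * (N ^ 2 * r) * m ^ 2 := by
      gcongr
      calc (N : ℝ) ^ 3 = N ^ 2 * N := by ring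
        _ ≤ _ := by gcongr
    rw [hre] at hh
    nlinarith
  have hX2 : (r / 2) ^ 2 * m * (32 * n * m * r) ≤ X := by
    refine le_trans ?_ hX1
    have : r / 2 ≤ N := by linarith
    gcongr
  have hcube : (e : ℝ) ^ 3 ≤ 32 ^ 3 * ((m₁ * m₂) * (n * ll) ^ 2) := by
    have e1 : (e : ℝ) ^ 3 = 32 ^ 3 * (m * n ^ 2) * ((r / 2) ^ 2 * m * (32 * n * m * r)) := by
      rw [hre]; ring
    rw [e1]
    calc _ ≤ 32 ^ 3 * (m * n ^ 2) * (ll ^ 2 * m₂) := mul_le_mul_of_nonneg_left (hX2.trans hX) (by positivity)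
      _ ≤ 32 ^ 3 * (m₁ * n ^ 2) * (ll ^ 2 * m₂) := by gcongr
      _ = _ := by ring
  have hY3 : ((m₁ * m₂) ^ ((1:ℝ)/3) * ((n : ℝ) * ll) ^ ((2:ℝ)/3)) ^ 3
      = (m₁ * m₂) * (n * ll) ^ 2 := by
    rw [mul_pow, ← Real.rpow_natCast, ← Real.rpow_natCast, ← Real.rpow_mul (by positivity),
      ← Real.rpow_mul (by positivity)]
    norm_num
  rw [← hY3, ← mul_pow] at hcube
  have := le_of_pow_le_pow_left₀ (by norm_num) (by positivity) hcube
  have : 0 ≤ m₁ * n := by positivity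
  linarith

lemma core (ℓ : ℕ) (γ : Fin ℓ → ℝ → ℝ × ℝ)
    (hcont : ∀ i, ContinuousOn (γ i) (Set.Icc 0 1))
    (hsimple : ∀ i, Set.InjOn (γ i) (Set.Icc 0 1))
    (P : Finset (ℝ × ℝ)) (m₁ m₂ : ℝ) (hm1 : 0 < m₁)
    (hmul : ∀ p ∈ P, ∀ q ∈ P, p ≠ q →
      ((Finset.univ.filter (fun i : Fin ℓ =>
        p ∈ γ i '' Set.Icc 0 1 ∧ q ∈ γ i '' Set.Icc 0 1)).card : ℝ) ≤ m₁)
    (hfin : ∀ i j : Fin ℓ, i ≠ j → (γ i '' Set.Icc 0 1 ∩ γ j '' Set.Icc 0 1).Finite)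
    (hm20 : 0 ≤ m₂)
    (hm2 : ∑ q : Fin ℓ × Fin ℓ, (if q.1 = q.2 then 0 else 
        (γ q.1 '' Set.Icc 0 1 ∩ γ q.2 '' Set.Icc 0 1).ncard : ℕ) ≤ (ℓ : ℝ) ^ 2 * m₂) :
    ((∑ i : Fin ℓ, (P.filter (fun p => p ∈ γ i '' Set.Icc 0 1)).card : ℕ) : ℝ)
          ≤ 64 * ((m₁ * m₂) ^ ((1:ℝ)/3) * ((P.card : ℝ) * ℓ) ^ ((2:ℝ)/3)
              + ℓ + m₁ * P.card) := by
  have hTfin : ∀ i, {t | t ∈ Set.Icc (0:ℝ) 1 ∧ γ i t ∈ P}.Finite := by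
    intro i
    refine Set.Finite.of_injOn (f := γ i) (t := (P : Set (ℝ × ℝ))) (fun t ht => ht.2) ?_
      P.finite_toSet
    exact (hsimple i).mono (fun t ht => ht.1)
  set T : Fin ℓ → Finset ℝ := fun i => (hTfin i).toFinset with hT
  have memT : ∀ i t, t ∈ T i ↔ t ∈ Set.Icc (0:ℝ) 1 ∧ γ i t ∈ P := by
    intro i t; simp [hT]
  have hTcard : ∀ i, (P.filter (fun p => p ∈ γ i '' Set.Icc 0 1)).card = (T i).card := by
    intro i
    have : P.filter (fun p => p ∈ γ i '' Set.Icc 0 1) = (T i).image (γ i) := by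
      ext p
      simp only [Finset.mem_filter, Finset.mem_image, memT]
      constructor
      · rintro ⟨hp, t, ht, rfl⟩; exact ⟨t, ⟨ht, hp⟩, rfl⟩
      · rintro ⟨t, ⟨ht, hp⟩, rfl⟩; exact ⟨hp, t, ht, rfl⟩
    rw [this, Finset.card_image_of_injOn]
    exact (hsimple i).mono (fun t ht => ((memT i t).1 ht).1)
  let V := {p // p ∈ P}
  let E := Σ i : Fin ℓ, {p // p ∈ consec (T i)}
  have hEcard : Fintype.card E = ∑ i, (consec (T i)).card := by
    simp [E, Fintype.card_sigma]
  have hI : ∑ i : Fin ℓ, (P.filter (fun p => p ∈ γ i '' Set.Icc 0 1)).card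
      ≤ Fintype.card E + ℓ := by
    rw [hEcard]
    calc _ ≤ ∑ i : Fin ℓ, ((consec (T i)).card + 1) := by
          refine Finset.sum_le_sum fun i _ => ?_
          rw [hTcard]; exact card_consec _
      _ = _ := by simp [Finset.sum_add_distrib]
  have hY : 0 ≤ (m₁ * m₂) ^ ((1:ℝ)/3) * ((P.card : ℝ) * ℓ) ^ ((2:ℝ)/3) := by positivity
  have hI' : ((∑ i : Fin ℓ, (P.filter (fun p => p ∈ γ i '' Set.Icc 0 1)).card : ℕ) : ℝ)
      ≤ (Fintype.card E : ℝ) + ℓ := by exact_mod_cast hI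
  have hl0 : (0 : ℝ) ≤ ℓ := Nat.cast_nonneg _
  have hmP : 0 ≤ m₁ * P.card := by positivity
  have hc : ∀ e : E, e.2.1.1 ∈ T e.1 ∧ e.2.1.2 ∈ T e.1 ∧ e.2.1.1 < e.2.1.2 ∧
      ∀ r ∈ T e.1, ¬ (e.2.1.1 < r ∧ r < e.2.1.2) := fun e => (mem_consec _ _).1 e.2.2
  let u : E → V := fun e => ⟨γ e.1 e.2.1.1, ((memT _ _).1 (hc e).1).2⟩
  let v : E → V := fun e => ⟨γ e.1 e.2.1.2, ((memT _ _).1 (hc e).2.1).2⟩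
  let A : E → Set (ℝ × ℝ) := fun e => γ e.1 '' Set.Icc e.2.1.1 e.2.1.2
  have hIcc : ∀ e : E, Set.Icc e.2.1.1 e.2.1.2 ⊆ Set.Icc (0:ℝ) 1 := fun e =>
    Set.Icc_subset_Icc ((memT _ _).1 (hc e).1).1.1 ((memT _ _).1 (hc e).2.1).1.2
  have hu01 : ∀ e : E, e.2.1.1 ∈ Set.Icc (0:ℝ) 1 := fun e => ((memT _ _).1 (hc e).1).1
  have hv01 : ∀ e : E, e.2.1.2 ∈ Set.Icc (0:ℝ) 1 := fun e => ((memT _ _).1 (hc e).2.1).1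
  have hJ : ∀ e, JoinedIn (A e) ((u e : V) : ℝ × ℝ) (v e : V) := by
    intro e
    have hle := (hc e).2.2.1.le
    have : IsPathConnected (A e) :=
      ((convex_Icc e.2.1.1 e.2.1.2).isPathConnected ⟨_, Set.left_mem_Icc.2 hle⟩).image'
        ((hcont e.1).mono (hIcc e))
    exact this.joinedIn _ ⟨_, Set.left_mem_Icc.2 hle, rfl⟩ _ ⟨_, Set.right_mem_Icc.2 hle, rfl⟩
  have huv : ∀ e, u e ≠ v e := by
    intro e h
    have := hsimple e.1 (hu01 e) (hv01 e) (congrArg Subtype.val h)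
    exact (hc e).2.2.1.ne this
  rcases isEmpty_or_nonempty E with hEe | ⟨⟨e0⟩⟩
  · have : Fintype.card E = 0 := Fintype.card_eq_zero
    rw [this] at hI'
    push_cast at hI' ⊢
    linarith
  -- equality of edges on the same curve
  have hext : ∀ e f : E, e.1 = f.1 → e.2.1.1 = f.2.1.1 → e.2.1.2 = f.2.1.2 → e = f := by
    rintro ⟨i, ⟨⟨s, t⟩, h⟩⟩ ⟨j, ⟨⟨s', t'⟩, h'⟩⟩ h1 h2 h3
    simp only at h1 h2 h3
    subst h1 h2 h3
    rfl
  set m := ⌊m₁⌋₊ with hm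
  have hcls : ∀ c : Sym2 V, (Finset.univ.filter (fun e : E => s(u e, v e) = c)).card ≤ m := by
    intro c
    induction c using Sym2.inductionOn with
    | _ p q =>
    by_cases hpq : p = q
    · rw [Finset.card_eq_zero.2]
      · exact Nat.zero_le _
      · rw [Finset.filter_eq_empty_iff]
        rintro e - h
        rw [Sym2.eq_iff] at h
        apply huv e
        rcases h with ⟨h, h'⟩ | ⟨h, h'⟩ <;> rw [h, h', hpq]
    · refine Nat.le_floor (le_trans ?_ (hmul p.1 p.2 q.1 q.2 (fun h => hpq (Subtype.ext h))))
      norm_cast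
      refine Finset.card_le_card_of_injOn (fun e => e.1) ?_ ?_
      · intro e he
        simp only [Finset.coe_filter, Finset.mem_univ, true_and, Set.mem_ofPred_eq] at he ⊢
        rw [Sym2.eq_iff] at he
        rcases he with ⟨rfl, rfl⟩ | ⟨rfl, rfl⟩
        · exact ⟨⟨_, hu01 e, rfl⟩, ⟨_, hv01 e, rfl⟩⟩
        · exact ⟨⟨_, hv01 e, rfl⟩, ⟨_, hu01 e, rfl⟩⟩
      · intro e he f hf hef
        simp only [Finset.coe_filter, Finset.mem_univ, true_and, Set.mem_ofPred_eq] at he hf hef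
        rw [← hf, Sym2.eq_iff] at he
        have hfu : γ f.1 f.2.1.1 = γ e.1 f.2.1.1 := by rw [hef]
        have hfv : γ f.1 f.2.1.2 = γ e.1 f.2.1.2 := by rw [hef]
        rcases he with ⟨h1, h2⟩ | ⟨h1, h2⟩
        · have h1 := congrArg Subtype.val h1
          have h2 := congrArg Subtype.val h2
          exact hext e f hef (hsimple e.1 (hu01 e) (hu01 f) (h1.trans hfu))
            (hsimple e.1 (hv01 e) (hv01 f) (h2.trans hfv))
        · have h1 := congrArg Subtype.val h1
          have h2 := congrArg Subtype.val h2
          have a1 := hsimple e.1 (hu01 e) (hv01 f) (h1.trans hfv)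
          have a2 := hsimple e.1 (hv01 e) (hu01 f) (h2.trans hfu)
          have b1 := (hc e).2.2.1
          have b2 := (hc f).2.2.1
          linarith
  have hmpos : 0 < m := by
    have := hcls s(u e0, v e0)
    refine lt_of_lt_of_le (Finset.card_pos.2 ⟨e0, by simp⟩) this
  have hPpos : 0 < P.card := Finset.card_pos.2 ⟨_, (u e0).2⟩
  obtain ⟨lab, hlab⟩ := exists_lab (fun e : E => s(u e, v e)) m hmpos
    (by intro c; convert hcls c)
  -- interior point of crossing
  have hint : ∀ e f : E, Crs u v A e f → ∀ x ∈ A e ∩ A f,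
      ∃ r, e.2.1.1 < r ∧ r < e.2.1.2 ∧ γ e.1 r = x := by
    rintro e f ⟨c1, c2, c3, c4, -⟩ x ⟨⟨r, hr, hrx⟩, ⟨q, hq, hqx⟩⟩
    have hend : x ∈ P → x = (u f).1 ∨ x = (v f).1 := by
      intro hxP
      have hqT : q ∈ T f.1 := (memT _ _).2 ⟨hIcc f hq, by rw [hqx]; exact hxP⟩
      have := (hc f).2.2.2 q hqT
      rcases eq_or_lt_of_le hq.1 with h | h
      · left; rw [← hqx, ← h]
      · rcases eq_or_lt_of_le hq.2 with h' | h'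
        · right; rw [← hqx, h']
        · exact absurd ⟨h, h'⟩ this
    refine ⟨r, lt_of_le_of_ne hr.1 ?_, lt_of_le_of_ne hr.2 ?_, hrx⟩
    · rintro h
      have hx : x = (u e).1 := by rw [← hrx, ← h]
      rcases hend (hx ▸ (u e).2) with h' | h'
      · exact c1 (Subtype.ext (hx.symm.trans h'))
      · exact c2 (Subtype.ext (hx.symm.trans h'))
    · rintro h
      have hx : x = (v e).1 := by rw [← hrx, h]
      rcases hend (hx ▸ (v e).2) with h' | h'
      · exact c3 (Subtype.ext (hx.symm.trans h'))
      · exact c4 (Subtype.ext (hx.symm.trans h'))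
  have hsymm : ∀ e f : E, Crs u v A e f → Crs u v A f e := by
    rintro e f ⟨c1, c2, c3, c4, h⟩
    exact ⟨c1.symm, c3.symm, c2.symm, c4.symm, by rwa [Set.inter_comm]⟩
  -- interiors on the same curve
  have hsame : ∀ e f : E, e.1 = f.1 → ∀ r r', e.2.1.1 < r → r < e.2.1.2 → f.2.1.1 < r' →
      r' < f.2.1.2 → γ e.1 r = γ f.1 r' → e = f := by
    intro e f hef r r' h1 h2 h3 h4 heq
    have hrr : r = r' := by
      rw [← hef] at heq
      exact hsimple e.1 (hIcc e ⟨h1.le, h2.le⟩) (hIcc f ⟨h3.le, h4.le⟩) heq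
    subst hrr
    obtain ⟨a1, a2, a3, a4⟩ := hc e
    obtain ⟨b1, b2, b3, b4⟩ := hc f
    have hTT : T f.1 = T e.1 := by rw [hef]
    have p1 := a4 _ (by rw [← hTT]; exact b1)
    have p2 := a4 _ (by rw [← hTT]; exact b2)
    have p3 := b4 _ (by rw [hTT]; exact a1)
    have p4 := b4 _ (by rw [hTT]; exact a2)
    apply hext e f hef
    · apply le_antisymm
      · by_contra h; exact p3 ⟨not_le.1 h, by linarith⟩
      · by_contra h; exact p1 ⟨not_le.1 h, by linarith⟩
    · apply le_antisymm
      · by_contra h; exact p2 ⟨by linarith, not_le.1 h⟩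
      · by_contra h; exact p4 ⟨by linarith, not_le.1 h⟩
  set XS := Finset.univ.filter (fun p : E × E => Crs u v A p.1 p.2) with hXS
  have hXle : XS.card ≤ ∑ q : Fin ℓ × Fin ℓ, (if q.1 = q.2 then 0 else 
        (γ q.1 '' Set.Icc 0 1 ∩ γ q.2 '' Set.Icc 0 1).ncard : ℕ) := by
    rw [Finset.card_eq_sum_card_fiberwise (f := fun p : E × E => (p.1.1, p.2.1))
      (t := Finset.univ) (fun _ _ => Finset.mem_coe.2 (Finset.mem_univ _))]
    refine Finset.sum_le_sum ?_
    rintro ⟨i, j⟩ -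
    by_cases hij : i = j
    · simp only [hij, if_true, Nat.le_zero, Finset.card_eq_zero]
      rw [Finset.filter_eq_empty_iff]
      rintro ⟨e, f⟩ hef h
      simp only [Prod.mk.injEq] at h
      have hef : Crs u v A e f := (Finset.mem_filter.1 hef).2
      obtain ⟨x, hx⟩ := hef.2.2.2.2
      obtain ⟨r, h1, h2, h3⟩ := hint e f hef x hx
      obtain ⟨r', h1', h2', h3'⟩ := hint f e (hsymm e f hef) x ⟨hx.2, hx.1⟩
      have := hsame e f (h.1.trans h.2.symm) r r' h1 h2 h1' h2' (h3.trans h3'.symm)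
      exact hef.1 (by rw [this])
    · simp only [hij, if_false]
      have hpt : ∀ p : E × E, ∃ x, Crs u v A p.1 p.2 → x ∈ A p.1 ∩ A p.2 := by
        intro p
        by_cases h : Crs u v A p.1 p.2
        · obtain ⟨x, hx⟩ := h.2.2.2.2
          exact ⟨x, fun _ => hx⟩
        · exact ⟨0, fun h' => absurd h' h⟩
      choose pt hpt using hpt
      rw [← Set.ncard_coe_finset]
      refine Set.ncard_le_ncard_of_injOn pt ?_ ?_ (hfin i j hij)
      · rintro ⟨e, f⟩ h
        simp only [hXS, Finset.coe_filter, Finset.mem_filter, Finset.mem_univ, true_and,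
          Set.mem_ofPred_eq, Prod.mk.injEq] at h
        obtain ⟨hcr, rfl, rfl⟩ := h
        have := hpt (e, f) hcr
        exact ⟨Set.image_mono (hIcc e) this.1, Set.image_mono (hIcc f) this.2⟩
      · rintro ⟨e, f⟩ h ⟨e', f'⟩ h' heq
        simp only [hXS, Finset.coe_filter, Finset.mem_filter, Finset.mem_univ, true_and,
          Set.mem_ofPred_eq, Prod.mk.injEq] at h h'
        obtain ⟨hcr, he, hf⟩ := h
        obtain ⟨hcr', he', hf'⟩ := h'
        have hx := hpt (e, f) hcr
        have hx' := hpt (e', f') hcr'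
        rw [← heq] at hx'
        obtain ⟨r1, a1, b1, c1⟩ := hint e f hcr _ hx
        obtain ⟨r2, a2, b2, c2⟩ := hint e' f' hcr' _ hx'
        obtain ⟨r3, a3, b3, c3⟩ := hint f e (hsymm _ _ hcr) _ ⟨hx.2, hx.1⟩
        obtain ⟨r4, a4, b4, c4⟩ := hint f' e' (hsymm _ _ hcr') _ ⟨hx'.2, hx'.1⟩
        have k1 := hsame e e' (he.trans he'.symm) r1 r2 a1 b1 a2 b2 (c1.trans c2.symm)
        have k2 := hsame f f' (hf.trans hf'.symm) r3 r4 a3 b3 a4 b4 (c3.trans c4.symm)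
        rw [k1, k2]
  have hfinal := final_arith (Fintype.card E) P.card m XS.card m₁ m₂ ℓ hmpos hPpos
    (Nat.floor_le hm1.le) hl0 hm20 (le_trans (by exact_mod_cast hXle) hm2) (by
      intro N hN
      have := multi_cross (fun p : V => (p : ℝ × ℝ)) u v A hJ huv N m hN hmpos lab hlab
      simpa [V] using this)
  linarith


/-- Székely-type incidence bound for simple curves, with only the *average*
pairwise intersection multiplicity `m₂` controlled: the number of point–curve
incidences satisfies `I ≪ (m₁ m₂)^{1/3} (pℓ)^{2/3} + ℓ + m₁ p`. -/
theorem stmt11 :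
    ∃ K : ℝ, 0 < K ∧
      ∀ (ℓ : ℕ) (γ : Fin ℓ → ℝ → ℝ × ℝ)
        (_hcont : ∀ i, ContinuousOn (γ i) (Set.Icc 0 1))
        (_hsimple : ∀ i, Set.InjOn (γ i) (Set.Icc 0 1))
        (P : Finset (ℝ × ℝ)) (m₁ m₂ : ℝ),
        (0 < m₁) →
        (∀ p ∈ P, ∀ q ∈ P, p ≠ q →
          ((Finset.univ.filter (fun i : Fin ℓ =>
            p ∈ γ i '' Set.Icc 0 1 ∧ q ∈ γ i '' Set.Icc 0 1)).card : ℝ) ≤ m₁) →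
        (∀ i j : Fin ℓ, i ≠ j →
          (γ i '' Set.Icc 0 1 ∩ γ j '' Set.Icc 0 1).Finite) →
        (m₂ = ((ℓ.choose 2 : ℝ))⁻¹ *
          ∑ q ∈ (Finset.univ ×ˢ Finset.univ).filter
              (fun q : Fin ℓ × Fin ℓ => q.1 < q.2),
            ((γ q.1 '' Set.Icc 0 1 ∩ γ q.2 '' Set.Icc 0 1).ncard : ℝ)) →
        ((∑ i : Fin ℓ, (P.filter (fun p => p ∈ γ i '' Set.Icc 0 1)).card : ℕ) : ℝ)
          ≤ K * ((m₁ * m₂) ^ ((1:ℝ)/3) * ((P.card : ℝ) * ℓ) ^ ((2:ℝ)/3)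
              + ℓ + m₁ * P.card) := by
  refine ⟨64, by norm_num, ?_⟩
  intro ℓ γ hcont hsimple P m₁ m₂ hm1 hmul hfin hm2
  set D : Fin ℓ × Fin ℓ → ℝ := fun q =>
    ((γ q.1 '' Set.Icc 0 1 ∩ γ q.2 '' Set.Icc 0 1).ncard : ℝ) with hD
  have hDs : ∀ q, D q.swap = D q := by
    intro q; simp only [hD, Prod.fst_swap, Prod.snd_swap, Set.inter_comm]
  set S := ∑ q ∈ (Finset.univ ×ˢ Finset.univ).filter
              (fun q : Fin ℓ × Fin ℓ => q.1 < q.2), D q with hS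
  have hS0 : 0 ≤ S := Finset.sum_nonneg fun q _ => Nat.cast_nonneg _
  have hm20 : 0 ≤ m₂ := by rw [hm2]; positivity
  have hsum : ((∑ q : Fin ℓ × Fin ℓ, (if q.1 = q.2 then 0 else 
        (γ q.1 '' Set.Icc 0 1 ∩ γ q.2 '' Set.Icc 0 1).ncard : ℕ) : ℕ) : ℝ) = 2 * S := by
    push_cast
    have h1 : S = ∑ q : Fin ℓ × Fin ℓ, if q.1 < q.2 then D q else 0 := by
      rw [hS, Finset.univ_product_univ, Finset.sum_filter]
    have h2 : S = ∑ q : Fin ℓ × Fin ℓ, if q.2 < q.1 then D q else 0 := by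
      rw [h1, ← Equiv.sum_comp (Equiv.prodComm (Fin ℓ) (Fin ℓ))]
      refine Finset.sum_congr rfl fun q _ => ?_
      simp only [Equiv.prodComm_apply, hDs, Prod.fst_swap, Prod.snd_swap]
    rw [two_mul]
    nth_rewrite 1 [h1]
    rw [h2, ← Finset.sum_add_distrib]
    refine Finset.sum_congr rfl fun q _ => ?_
    rcases lt_trichotomy q.1 q.2 with h | h | h
    · simp [h, h.ne, h.not_gt, hD]
    · simp [h]
    · simp [h, h.ne', h.not_gt, hD]
  refine core ℓ γ hcont hsimple P m₁ m₂ hm1 hmul hfin hm20 ?_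
  rw [hsum]
  rcases Nat.lt_or_ge ℓ 2 with hl | hl
  · have : S = 0 := by
      rw [hS]
      apply Finset.sum_eq_zero
      rintro ⟨a, b⟩ h
      have h := (Finset.mem_filter.1 h).2
      have := a.2; have := b.2
      simp only [Fin.lt_def] at h
      omega
    rw [this]; simp; positivity
  · have hch : (0 : ℝ) < (ℓ.choose 2 : ℝ) := by exact_mod_cast Nat.choose_pos hl
    have hSm : S = (ℓ.choose 2 : ℝ) * m₂ := by rw [hm2]; field_simp
    have hchle : (2 : ℝ) * (ℓ.choose 2 : ℝ) ≤ (ℓ : ℝ) ^ 2 := by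
      rw [Nat.cast_choose_two]
      have : (0 : ℝ) ≤ ℓ := Nat.cast_nonneg _
      nlinarith
    rw [hSm]
    nlinarith
end

section
/- Let 0 < ε ≤ 1 and let A be a set of n positive reals pairwise at least 1 apart, with all elements in a single dyadic interval [x, 2x) where x ≥ n. With perturbed products P defined as in the main theorem (|δ_{a,b}| < n^{1−ε}/a, |δ'_{a,b}| < n^{1−ε}/b), one has |P|·|A+A| ≫ n^{2−ε(5·(1/9)/2 − 1/2)} / (log n)^{2/3}, i.e., |P|·|A+A| ≫ n^{2 + ε·13/36}/(log n)^{2/3}... more simply: |P| · |A+A| ≫ n^{2 + ε/4} up to logarithmic factors, when all of A lies in one dyadic interval. -/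
open Finset Pointwise

namespace S17

noncomputable def F (S : Finset ℝ) (t : ℝ) : ℕ := (S.filter (· ≤ t)).card

lemma F_mono (S : Finset ℝ) {u v : ℝ} (h : u ≤ v) : F S u ≤ F S v := by
  unfold F
  apply card_le_card
  intro w hw
  simp only [mem_filter] at hw ⊢
  exact ⟨hw.1, hw.2.trans h⟩

lemma F_lt (S : Finset ℝ) {u v : ℝ} (hv : v ∈ S) (h : u < v) : F S u < F S v := by
  unfold F
  apply card_lt_card
  rw [Finset.ssubset_iff_of_subset]
  · exact ⟨v, by simp [hv], by simp [h]⟩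
  · intro w hw
    simp only [mem_filter] at hw ⊢
    exact ⟨hw.1, hw.2.trans h.le⟩

lemma F_le (S : Finset ℝ) (u : ℝ) : F S u ≤ S.card := card_filter_le _ _

noncomputable def Q (S : Finset ℝ) (K : ℝ) : Finset (ℝ × ℝ) :=
  (S ×ˢ S).filter (fun q => q.1 < q.2 ∧ (F S q.2 : ℝ) - F S q.1 ≤ K)

lemma Q_card (S : Finset ℝ) (K : ℝ) (hK : 0 ≤ K) : ((Q S K).card : ℝ) ≤ K * S.card := by
  have h : (Q S K).card ≤ ⌊K⌋₊ * S.card := by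
    apply card_le_mul_card_image_of_maps_to (f := Prod.fst)
    · intro q hq
      simp only [Q, mem_filter, mem_product] at hq
      exact hq.1.1
    · intro u hu
      have : (Finset.Ioc (F S u) (F S u + ⌊K⌋₊)).card = ⌊K⌋₊ := by simp
      rw [← this]
      apply card_le_card_of_injOn (fun q => F S q.2)
      · intro q hq
        simp only [Q, coe_filter, mem_filter, mem_product, Set.mem_ofPred_eq] at hq
        obtain ⟨⟨⟨h1, h2⟩, h3, h4⟩, h5⟩ := hq
        subst h5
        simp only [coe_Ioc, Set.mem_Ioc]
        have h6 := F_lt S h2 h3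
        refine ⟨h6, ?_⟩
        have : F S q.2 - F S q.1 ≤ ⌊K⌋₊ := by
          apply Nat.le_floor
          rw [Nat.cast_sub h6.le]; exact h4
        omega
      · intro q hq q' hq' hh
        simp only [Q, coe_filter, mem_filter, mem_product, Set.mem_ofPred_eq] at hq hq'
        obtain ⟨⟨⟨h1, h2⟩, h3, h4⟩, h5⟩ := hq
        obtain ⟨⟨⟨h1', h2'⟩, h3', h4'⟩, h5'⟩ := hq'
        refine Prod.ext (h5.trans h5'.symm) ?_
        simp only at hh
        rcases lt_trichotomy q.2 q'.2 with h | h | h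
        · have := F_lt S h2' h; omega
        · exact h
        · have := F_lt S h2 h; omega
  calc ((Q S K).card : ℝ) ≤ ((⌊K⌋₊ * S.card : ℕ) : ℝ) := by exact_mod_cast h
    _ ≤ K * S.card := by
      push_cast
      gcongr
      exact Nat.floor_le hK

lemma markov (S : Finset ℝ) (f : ℕ → ℝ) (m : ℕ) (K : ℝ)
    (hf : ∀ i < m, f i ≤ f (i+1)) :
    K * (((range m).filter (fun i => ¬ ((F S (f (i+1)) : ℝ) - F S (f i) ≤ K))).card : ℝ)
      ≤ S.card := by
  have h1 : ∑ i ∈ range m, ((F S (f (i+1)) : ℝ) - F S (f i)) ≤ S.card := by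
    rw [Finset.sum_range_sub (fun i => (F S (f i) : ℝ))]
    have : (F S (f m) : ℝ) ≤ S.card := by exact_mod_cast F_le S _
    have : (0:ℝ) ≤ F S (f 0) := by positivity
    linarith
  refine le_trans ?_ h1
  rw [mul_comm, ← nsmul_eq_mul, ← Finset.sum_const]
  refine le_trans (Finset.sum_le_sum (g := fun i => (F S (f (i+1)) : ℝ) - F S (f i)) ?_) ?_
  · intro i hi
    simp only [mem_filter, not_le] at hi
    exact hi.2.le
  · apply Finset.sum_le_sum_of_subset_of_nonneg (filter_subset _ _)
    intro i hi _
    have : (F S (f i) : ℝ) ≤ F S (f (i+1)) := by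
      exact_mod_cast F_mono S (hf i (mem_range.1 hi))
    linarith

lemma sep_card (S : Finset ℝ) (l L : ℝ) (hsep : ∀ a ∈ S, ∀ b ∈ S, a ≠ b → 1 ≤ |a - b|)
    (hS : ∀ a ∈ S, l ≤ a ∧ a ≤ l + L) (hL : 0 ≤ L) : (S.card : ℝ) ≤ L + 1 := by
  have h : S.card ≤ (range (⌊L⌋₊ + 1)).card := by
    apply card_le_card_of_injOn (fun a => ⌊a - l⌋₊)
    · intro a ha
      simp only [coe_range, Set.mem_Iio]
      have := hS a ha
      exact Nat.lt_succ_of_le (Nat.floor_le_floor (by linarith))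
    · intro a ha b hb hab
      by_contra hne
      have h1 := hsep a ha b hb hne
      simp only at hab
      have a1 := Nat.floor_le (sub_nonneg.2 (hS a ha).1)
      have a2 := Nat.lt_floor_add_one (a - l)
      have b1 := Nat.floor_le (sub_nonneg.2 (hS b hb).1)
      have b2 := Nat.lt_floor_add_one (b - l)
      rw [hab] at a1 a2
      have : |a - b| < 1 := by rw [abs_lt]; constructor <;> linarith
      linarith
  rw [card_range] at h
  have h2 : (S.card : ℝ) ≤ (⌊L⌋₊ : ℝ) + 1 := by exact_mod_cast h
  linarith [Nat.floor_le hL]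

lemma core (A P : Finset ℝ) (n : ℕ) (x η : ℝ) (p : ℝ → ℝ → ℝ) (e : ℕ → ℝ)
    (hn : A.card = n) (hn4 : 4 ≤ n) (hη : 1 ≤ η) (hx : 10 * η < x)
    (hA : ∀ a ∈ A, x ≤ a)
    (hsep : ∀ a ∈ A, ∀ b ∈ A, a ≠ b → 1 ≤ |a - b|)
    (hp : ∀ a ∈ A, ∀ c ∈ A, |p a c - a * c| ≤ 5 * η)
    (hP : ∀ a ∈ A, ∀ c ∈ A, p a c ∈ P)
    (heA : ∀ i < n, e i ∈ A) (he : ∀ i j, i < j → j < n → e i < e j) :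
    (n : ℝ) ^ 5 ≤ 2624 * η * ((A + A).card : ℝ) ^ 2 * (P.card : ℝ) ^ 2 := by
  have hn0 : (0 : ℝ) < n := by
    have : 0 < n := by omega
    exact_mod_cast this
  set X := A + A with hXdef
  set KX : ℝ := 4 * X.card / n with hKX
  set KP : ℝ := 4 * P.card / n with hKP
  have hstep : ∀ i < n - 1, e i ∈ A ∧ e (i+1) ∈ A ∧ e i + 1 ≤ e (i+1) := by
    intro i hi
    have h1 := heA i (by omega)
    have h2 := heA (i+1) (by omega)
    have h3 := he i (i+1) (by omega) (by omega)
    have h4 := hsep _ h2 _ h1 h3.ne'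
    rw [abs_of_pos (by linarith)] at h4
    exact ⟨h1, h2, by linarith⟩
  have hpstep : ∀ a ∈ A, ∀ i < n - 1, p a (e i) < p a (e (i+1)) := by
    intro a ha i hi
    obtain ⟨h1, h2, h3⟩ := hstep i hi
    have h4 := abs_le.1 (hp a ha _ h1)
    have h5 := abs_le.1 (hp a ha _ h2)
    have h6 := hA a ha
    have : a * 1 ≤ a * (e (i+1) - e i) := by
      apply mul_le_mul_of_nonneg_left <;> linarith
    nlinarith
  let gX : ℝ → ℕ → Prop := fun b i => (F X (b + e (i+1)) : ℝ) - F X (b + e i) ≤ KX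
  let gP : ℝ → ℕ → Prop := fun a i => (F P (p a (e (i+1))) : ℝ) - F P (p a (e i)) ≤ KP
  classical
  have hXpos : (0:ℝ) < X.card := by
    have : X.Nonempty := ⟨e 0 + e 0, Finset.add_mem_add (heA 0 (by omega)) (heA 0 (by omega))⟩
    exact_mod_cast this.card_pos
  have hPpos : (0:ℝ) < P.card := by
    have : P.Nonempty := ⟨_, hP _ (heA 0 (by omega)) _ (heA 0 (by omega))⟩
    exact_mod_cast this.card_pos
  have hKXpos : 0 < KX := by positivity
  have hKPpos : 0 < KP := by positivity
  have hgood : ∀ a ∈ A, ∀ b ∈ A,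
      (n : ℝ) / 4 ≤ (((range (n-1)).filter (fun i => gX b i ∧ gP a i)).card : ℝ) := by
    intro a ha b hb
    have m1 := markov X (fun i => b + e i) (n-1) KX (by
      intro i hi; have := hstep i hi; linarith)
    have m2 := markov P (fun i => p a (e i)) (n-1) KP (by
      intro i hi; exact (hpstep a ha i hi).le)
    have m1' : (((range (n-1)).filter (fun i => ¬ gX b i)).card : ℝ) ≤ n / 4 := by
      have h : KX * (((range (n-1)).filter (fun i => ¬ gX b i)).card : ℝ) ≤ KX * (n / 4) := by
        refine m1.trans (le_of_eq ?_)
        rw [hKX]; field_simp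
      exact le_of_mul_le_mul_left h hKXpos
    have m2' : (((range (n-1)).filter (fun i => ¬ gP a i)).card : ℝ) ≤ n / 4 := by
      have h : KP * (((range (n-1)).filter (fun i => ¬ gP a i)).card : ℝ) ≤ KP * (n / 4) := by
        refine m2.trans (le_of_eq ?_)
        rw [hKP]; field_simp
      exact le_of_mul_le_mul_left h hKPpos
    have hsub : range (n-1) ⊆ (range (n-1)).filter (fun i => gX b i ∧ gP a i) ∪
        ((range (n-1)).filter (fun i => ¬ gX b i) ∪ (range (n-1)).filter (fun i => ¬ gP a i)) := by
      intro i hi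
      simp only [mem_union, mem_filter, hi, true_and]
      tauto
    have h1 := (card_le_card hsub).trans ((card_union_le _ _).trans
      (Nat.add_le_add_left (card_union_le _ _) _))
    rw [card_range] at h1
    have h2 : (n : ℝ) ≤ ((range (n-1)).filter (fun i => gX b i ∧ gP a i)).card +
        (((range (n-1)).filter (fun i => ¬ gX b i)).card +
          ((range (n-1)).filter (fun i => ¬ gP a i)).card) + 1 := by
      have : n ≤ ((range (n-1)).filter (fun i => gX b i ∧ gP a i)).card +
        (((range (n-1)).filter (fun i => ¬ gX b i)).card +
          ((range (n-1)).filter (fun i => ¬ gP a i)).card) + 1 := by omega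
      exact_mod_cast this
    have h4 : (4:ℝ) ≤ n := by exact_mod_cast hn4
    linarith
  let T : Finset ((_ : ℝ × ℝ) × ℕ) :=
    (A ×ˢ A).sigma (fun q => (range (n-1)).filter (fun i => gX q.2 i ∧ gP q.1 i))
  have hTcard : (n : ℝ) ^ 3 / 4 ≤ T.card := by
    rw [Finset.card_sigma]
    push_cast
    have : ∑ q ∈ A ×ˢ A, (n : ℝ) / 4 ≤ ∑ q ∈ A ×ˢ A,
        (((range (n-1)).filter (fun i => gX q.2 i ∧ gP q.1 i)).card : ℝ) := by
      apply Finset.sum_le_sum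
      intro q hq
      rw [mem_product] at hq
      exact hgood _ hq.1 _ hq.2
    refine le_trans (le_of_eq ?_) this
    rw [Finset.sum_const, card_product, hn, nsmul_eq_mul]
    push_cast; ring
  have hTmem : ∀ t ∈ T, t.1.1 ∈ A ∧ t.1.2 ∈ A ∧ t.2 < n - 1 ∧ gX t.1.2 t.2 ∧ gP t.1.1 t.2 := by
    intro t ht
    simp only [T, mem_sigma, mem_product, mem_filter, mem_range] at ht
    tauto
  let φ : ((_ : ℝ × ℝ) × ℕ) → (ℝ × ℝ) × (ℝ × ℝ) := fun t =>
    ((t.1.2 + e t.2, t.1.2 + e (t.2+1)), (p t.1.1 (e t.2), p t.1.1 (e (t.2+1))))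
  have hmap : ∀ t ∈ T, φ t ∈ Q X KX ×ˢ Q P KP := by
    intro t ht
    obtain ⟨h1, h2, h3, h4, h5⟩ := hTmem t ht
    obtain ⟨s1, s2, s3⟩ := hstep _ h3
    simp only [φ, mem_product, Q, mem_filter]
    exact ⟨⟨⟨Finset.add_mem_add h2 s1, Finset.add_mem_add h2 s2⟩, by linarith, h4⟩,
      ⟨hP _ h1 _ s1, hP _ h1 _ s2⟩, hpstep _ h1 _ h3, h5⟩
  have hfib : ∀ z ∈ Q X KX ×ˢ Q P KP, (T.filter (fun t => φ t = z)).card ≤ ⌊41 * η⌋₊ := by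
    intro z _
    apply Nat.le_floor
    rcases (T.filter (fun t => φ t = z)).eq_empty_or_nonempty with h0 | ⟨t0, ht0⟩
    · rw [h0]; simp; linarith
    rw [mem_filter] at ht0
    have hkey : ∀ t ∈ T.filter (fun t => φ t = z), ∀ t' ∈ T.filter (fun t => φ t = z),
        |t.1.1 - t'.1.1| ≤ 20 * η ∧ (t.1.1 = t'.1.1 → t = t') := by
      intro t ht t' ht'
      rw [mem_filter] at ht ht'
      obtain ⟨h1, h2, h3, -, -⟩ := hTmem t ht.1
      obtain ⟨h1', h2', h3', -, -⟩ := hTmem t' ht'.1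
      obtain ⟨s1, s2, s3⟩ := hstep _ h3
      obtain ⟨s1', s2', s3'⟩ := hstep _ h3'
      have heq := ht.2.trans ht'.2.symm
      simp only [φ, Prod.mk.injEq] at heq
      obtain ⟨⟨q1, q2⟩, q3, q4⟩ := heq
      obtain ⟨⟨a, b⟩, i⟩ := t
      obtain ⟨⟨a', b'⟩, i'⟩ := t'
      simp only at *
      have e1 := abs_le.1 (hp a h1 _ s1)
      have e2 := abs_le.1 (hp a h1 _ s2)
      have e1' := abs_le.1 (hp a' h1' _ s1')
      have e2' := abs_le.1 (hp a' h1' _ s2')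
      constructor
      · have hd : e (i'+1) - e i' = e (i+1) - e i := by linarith
        have hd' : a' * e (i'+1) - a' * e i' = a' * (e (i+1) - e i) := by rw [← hd]; ring
        have hb : |a - a'| * (e (i+1) - e i) ≤ 20 * η := by
          rw [← abs_of_pos (show 0 < e (i+1) - e i by linarith), ← abs_mul, abs_le]
          constructor <;> linarith
        have : |a - a'| * 1 ≤ |a - a'| * (e (i+1) - e i) := by
          apply mul_le_mul_of_nonneg_left _ (abs_nonneg _); linarith
        linarith
      · intro haa
        subst haa
        have hii : e i = e i' := by
          by_contra hne
          have h7 := hsep _ s1 _ s1' hne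
          have h8 := hA a h1
          have h9 : a * |e i - e i'| ≤ 10 * η := by
            rw [← abs_of_pos (show 0 < a by linarith), ← abs_mul, abs_le]
            constructor <;> linarith
          have h10 : a * 1 ≤ a * |e i - e i'| := by
            apply mul_le_mul_of_nonneg_left h7; linarith
          linarith
        have hi : i = i' := by
          rcases lt_trichotomy i i' with h | h | h
          · have := he i i' h (by omega); linarith
          · exact h
          · have := he i' i h (by omega); linarith
        subst hi
        have : b = b' := by linarith
        subst this
        rfl
    have hinj : (T.filter (fun t => φ t = z)).card =
        ((T.filter (fun t => φ t = z)).image (fun t => t.1.1)).card := by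
      rw [card_image_of_injOn]
      intro t ht t' ht' h
      exact (hkey t ht t' ht').2 h
    rw [hinj]
    have := sep_card ((T.filter (fun t => φ t = z)).image (fun t => t.1.1))
      (t0.1.1 - 20 * η) (40 * η) ?_ ?_ (by linarith)
    · linarith
    · intro a ha b hb
      simp only [mem_image] at ha hb
      obtain ⟨t, ht, rfl⟩ := ha
      obtain ⟨t', ht', rfl⟩ := hb
      exact hsep _ (hTmem t (mem_filter.1 ht).1).1 _ (hTmem t' (mem_filter.1 ht').1).1
    · intro a ha
      simp only [mem_image] at ha
      obtain ⟨t, ht, rfl⟩ := ha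
      have := abs_le.1 (hkey t ht t0 (mem_filter.2 ht0)).1
      constructor <;> linarith
  have hfin := card_le_mul_card_image_of_maps_to hmap _ hfib
  rw [card_product] at hfin
  have hfin' : (T.card : ℝ) ≤ ⌊41 * η⌋₊ * ((Q X KX).card * (Q P KP).card) := by
    exact_mod_cast hfin
  have hbound : (n:ℝ)^3/4 ≤ 41 * η * ((KX * X.card) * (KP * P.card)) := by
    refine hTcard.trans (hfin'.trans ?_)
    have := Q_card X KX hKXpos.le
    have := Q_card P KP hKPpos.le
    have := Nat.floor_le (show 0 ≤ 41 * η by linarith)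
    gcongr
  have hexp : 41 * η * ((KX * X.card) * (KP * P.card)) =
      656 * η * (X.card:ℝ)^2 * (P.card:ℝ)^2 / n^2 := by
    rw [hKX, hKP]; field_simp; ring
  rw [hexp, le_div_iff₀ (by positivity)] at hbound
  nlinarith

end S17

/-- Dyadic-interval case of the incidence argument: if the 1-separated set `A`
of `n` positive reals lies in a single dyadic interval `[x, 2x)` with `x ≥ n`,
then the perturbed product set `P` satisfies
`|P| · |A+A| ≫ n^{2 + 13ε/36} / (log n)^{2/3}`. -/
theorem stmt17 (ε : ℝ) (hε0 : 0 < ε) (hε1 : ε ≤ 1) :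
    ∃ c : ℝ, 0 < c ∧ ∃ n₀ : ℕ, ∀ (A : Finset ℝ) (n : ℕ) (x : ℝ),
      A.card = n → n₀ < n → (n : ℝ) ≤ x →
      (∀ a ∈ A, x ≤ a ∧ a < 2 * x) →
      (∀ a ∈ A, ∀ b ∈ A, a ≠ b → 1 ≤ |a - b|) →
      ∀ δ δ' : ℝ → ℝ → ℝ,
        (∀ a ∈ A, ∀ b ∈ A,
          |δ a b| < (n : ℝ) ^ (1 - ε) / a ∧ |δ' a b| < (n : ℝ) ^ (1 - ε) / b) →
        ∀ P : Finset ℝ,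
          P = (A ×ˢ A).image (fun p => (p.1 + δ p.1 p.2) * (p.2 + δ' p.1 p.2)) →
          c * (n : ℝ) ^ (2 + 13 * ε / 36) / (Real.log n) ^ ((2:ℝ)/3)
            ≤ (P.card : ℝ) * ((A + A).card : ℝ) := by
  obtain ⟨N, hN⟩ : ∃ N : ℕ, ∀ n : ℕ, N ≤ n → (10:ℝ) < (n:ℝ) ^ ε := by
    have := ((tendsto_rpow_atTop hε0).comp tendsto_natCast_atTop_atTop).eventually_gt_atTop (10:ℝ)
    exact Filter.eventually_atTop.1 this
  refine ⟨1/52, by norm_num, max N 4, ?_⟩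
  intro A n x hcard hn hnx hA hsep δ δ' hδ P hP
  have hnN : N ≤ n := le_of_lt (lt_of_le_of_lt (le_max_left _ _) hn)
  have hn4 : 4 ≤ n := le_of_lt (lt_of_le_of_lt (le_max_right _ _) hn)
  have h4 : (4:ℝ) ≤ n := by exact_mod_cast hn4
  have hn0 : (0:ℝ) < n := by linarith
  have h10 := hN n hnN
  set η : ℝ := (n:ℝ) ^ (1 - ε) with hηdef
  have hη1 : 1 ≤ η := Real.one_le_rpow (by linarith) (by linarith)
  have hηn : η * (n:ℝ) ^ ε = n := by
    rw [hηdef, ← Real.rpow_add hn0]; simp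
  have hηx : 10 * η < x := by nlinarith
  have hx0 : 0 < x := by linarith
  have hp : ∀ a ∈ A, ∀ c ∈ A, |(a + δ a c) * (c + δ' a c) - a * c| ≤ 5 * η := by
    intro a ha c hc
    obtain ⟨d1, d2⟩ := hδ a ha c hc
    obtain ⟨a1, a2⟩ := hA a ha
    obtain ⟨c1, c2⟩ := hA c hc
    have d1x : |δ a c| ≤ η / x := d1.le.trans (by gcongr)
    have d2x : |δ' a c| ≤ η / x := d2.le.trans (by gcongr)
    have : (a + δ a c) * (c + δ' a c) - a * c = a * δ' a c + δ a c * c + δ a c * δ' a c := by ring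
    rw [this]
    refine (abs_add_three _ _ _).trans ?_
    rw [abs_mul, abs_mul, abs_mul, abs_of_pos (show 0 < a by linarith),
      abs_of_pos (show 0 < c by linarith)]
    have k1 : a * |δ' a c| ≤ (2*x) * (η / x) := by gcongr
    have k2 : |δ a c| * c ≤ (η / x) * (2*x) := by
      have : 0 ≤ c := by linarith
      gcongr
    have k3 : |δ a c| * |δ' a c| ≤ (η/x) * (η/x) := by gcongr
    have k4 : η / x ≤ 1 := by rw [div_le_one hx0]; linarith
    have k5 : (η/x) * (η/x) ≤ η := by
      have : 0 ≤ η / x := by positivity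
      nlinarith
    have k6 : (η / x) * (2*x) = 2 * η := by field_simp
    linarith
  have hmain := S17.core A P n x η (fun a c => (a + δ a c) * (c + δ' a c))
    (fun i => if h : i < n then A.orderEmbOfFin hcard ⟨i, h⟩ else 0)
    hcard hn4 hη1 hηx (fun a ha => (hA a ha).1) hsep hp
    (by
      intro a ha c hc
      rw [hP, mem_image]
      exact ⟨(a, c), mem_product.2 ⟨ha, hc⟩, rfl⟩)
    (by
      intro i hi
      simp only [hi, dif_pos]
      exact Finset.orderEmbOfFin_mem _ _ _)
    (by
      intro i j hij hj
      have hi : i < n := by omega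
      simp only [hi, hj, dif_pos]
      exact (A.orderEmbOfFin hcard).strictMono hij)
  set X : ℝ := ((A + A).card : ℝ)
  set p : ℝ := (P.card : ℝ)
  have hX0 : 0 ≤ X := by positivity
  have hp0 : 0 ≤ p := by positivity
  have hpow : ((n:ℝ) ^ (2 + ε / 2)) ^ 2 * η = (n:ℝ)^5 := by
    rw [hηdef, ← Real.rpow_natCast, ← Real.rpow_mul hn0.le, ← Real.rpow_add hn0,
      ← Real.rpow_natCast]
    congr 1
    push_cast; ring
  have hsq : ((n:ℝ) ^ (2 + ε / 2)) ^ 2 ≤ (52 * (p * X)) ^ 2 := by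
    have : ((n:ℝ) ^ (2 + ε / 2)) ^ 2 * η ≤ (52 * (p * X)) ^ 2 * η := by
      rw [hpow]
      have : 0 ≤ η * X^2 * p^2 := by positivity
      nlinarith
    exact le_of_mul_le_mul_right this (by linarith)
  have hle : (n:ℝ) ^ (2 + ε / 2) ≤ 52 * (p * X) := by
    exact le_of_sq_le_sq hsq (by positivity)
  have hlog : 1 ≤ Real.log n := by
    rw [Real.le_log_iff_exp_le hn0]
    linarith [Real.exp_one_lt_d9]
  have hlog' : 1 ≤ (Real.log n) ^ ((2:ℝ)/3) := Real.one_le_rpow hlog (by norm_num)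
  have hexp : (n:ℝ) ^ (2 + 13 * ε / 36) ≤ (n:ℝ) ^ (2 + ε / 2) :=
    Real.rpow_le_rpow_of_exponent_le (by linarith) (by linarith)
  refine (div_le_self (by positivity) hlog').trans ?_
  linarith
end
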